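/- arXiv:2510.17344 — 3 statements merged into one kernel-verified Lean document; each statement's English description precedes it below -/
import Mathlib

section
/- If in the graph H of the paths construction some paths solution T is reachable from the initial configuration S within the budget b = 2n(κ−1)κ token slides in the discovery token sliding model, then the Multicolored Clique instance (G, κ) is a yes-instance. -/
namespace TokenDiscovery

variable {V : Type*} {α : Type*}

/-- One token slide in the discovery token sliding model: exactly one token
moves from its current vertex to an adjacent vertex (several tokens may share
a vertex during the transformation).  A configuration assigns to every token
(indexed by `α`) its current vertex. -/
def Step (G : SimpleGraph V) (c c' : α → V) : Prop :=
  ∃ i : α, G.Adj (c i) (c' i) ∧ ∀ j : α, j ≠ i → c' j = c j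

/-- `T` is reachable from the initial configuration `c₀` within at most `b`
token slides in the discovery token sliding model: some transformation
sequence of at most `b` token slides moves the tokens from `c₀` to a
configuration with exactly one token on each vertex of `T`. -/
def Reachable (G : SimpleGraph V) (c₀ : α → V) (T : Set V) (b : ℕ) : Prop :=
  ∃ (m : ℕ) (f : ℕ → α → V), m ≤ b ∧ f 0 = c₀ ∧
    (∀ i : ℕ, i < m → Step G (f i) (f (i + 1))) ∧
    Function.Injective (f m) ∧ Set.range (f m) = T

/-- `T` is reachable from `c₀` within at most `b` token slides in the
(plain) token sliding model: at every moment the tokens occupy pairwise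
distinct vertices, and each token slide moves one token along an edge
(necessarily to an unoccupied vertex, since configurations stay injective). -/
def SlidingReachable (G : SimpleGraph V) (c₀ : α → V) (T : Set V) (b : ℕ) : Prop :=
  ∃ (m : ℕ) (f : ℕ → α → V), m ≤ b ∧ f 0 = c₀ ∧
    (∀ i : ℕ, i ≤ m → Function.Injective (f i)) ∧
    (∀ i : ℕ, i < m → Step G (f i) (f (i + 1))) ∧
    Set.range (f m) = T

end TokenDiscovery

namespace PathsConstruction

/-- Pre-nodes of the paths construction obtained from a Multicolored Clique
instance with `κ` color classes of `n` vertices each.  The vertex `x` of class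
`i` is the pair `(i, x) : Fin κ × Fin n`, and its index is `ι(i, x) = x + 1`. -/
inductive PreNode (κ n : ℕ) : Type
  /-- the teal vertex block node `b_i` -/
  | vblock (i : Fin κ)
  /-- the `p`-th node (for `p < n(κ−1)`) of the path vertex-gadget for `(i, x)` -/
  | vnode (i : Fin κ) (x : Fin n) (p : ℕ)
  /-- the gray edge block node `b_{i,j}` (for `i < j`) -/
  | eblock (i j : Fin κ)
  /-- the `p`-th node (for `p < 2n`) of the path edge-gadget for the edge `(i,x)(j,y)` -/
  | enode (i j : Fin κ) (x y : Fin n) (p : ℕ)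
  /-- green connector node for the pair `{i, j}` (with `i < j`); `fromSecond`
  tells whether it is the connector from color `j` (rather than from color `i`),
  and `isIndex` whether it is the index (rather than the remainder) connector -/
  | conn (i j : Fin κ) (fromSecond : Bool) (isIndex : Bool)

variable {κ n : ℕ}

/-- The index (`isIndex = true`) or remainder (`isIndex = false`) connector
node from color `i` to the pair `{i, j}`. -/
def connFor (i j : Fin κ) (isIndex : Bool) : PreNode κ n :=
  if i < j then PreNode.conn i j false isIndex else PreNode.conn j i true isIndex

variable (G : SimpleGraph (Fin κ × Fin n))

/-- The pre-nodes actually present in the paths construction for the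
Multicolored Clique instance `G`. -/
def Valid : PreNode κ n → Prop
  | PreNode.vblock _ => True
  | PreNode.vnode _ _ p => p < n * (κ - 1)
  | PreNode.eblock i j => i < j
  | PreNode.enode i j x y p => i < j ∧ G.Adj (i, x) (j, y) ∧ p < 2 * n
  | PreNode.conn i j _ _ => i < j

/-- Nodes of the paths construction. -/
abbrev Node := {w : PreNode κ n // Valid G w}

/-- The class corresponding to the `g`-th group (0-based) of a path
vertex-gadget of the vertex-block for `i`: the groups enumerate the classes
different from `i` in increasing order. -/
def classOfGroup (i : Fin κ) (g : ℕ) : ℕ := if g < (i : ℕ) then g else g + 1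

/-- The base adjacency relation of the paths construction (to be symmetrized).
Within the group of a path vertex-gadget (or the half of a path edge-gadget)
corresponding to a vertex of index `ι = x + 1`, the first `ι` nodes go to the
index connector and the remaining `n − ι` nodes go to the remainder
connector. -/
def Rel : PreNode κ n → PreNode κ n → Prop := fun a b =>
  (∃ i x p, a = PreNode.vnode i x p ∧ b = PreNode.vnode i x (p + 1)) ∨
  (∃ i x p, a = PreNode.vnode i x p ∧ b = PreNode.vblock i) ∨
  (∃ (i : Fin κ) (x : Fin n) (p : ℕ) (j : Fin κ), (j : ℕ) = classOfGroup i (p / n) ∧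
      p % n ≤ (x : ℕ) ∧ a = PreNode.vnode i x p ∧ b = connFor i j true) ∨
  (∃ (i : Fin κ) (x : Fin n) (p : ℕ) (j : Fin κ), (j : ℕ) = classOfGroup i (p / n) ∧
      (x : ℕ) < p % n ∧ a = PreNode.vnode i x p ∧ b = connFor i j false) ∨
  (∃ i j x y p, a = PreNode.enode i j x y p ∧ b = PreNode.enode i j x y (p + 1)) ∨
  (∃ i j x y p, a = PreNode.enode i j x y p ∧ b = PreNode.eblock i j) ∨
  (∃ (i j : Fin κ) (x y : Fin n) (p : ℕ), p ≤ (x : ℕ) ∧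
      a = PreNode.enode i j x y p ∧ b = connFor i j true) ∨
  (∃ (i j : Fin κ) (x y : Fin n) (p : ℕ), (x : ℕ) < p ∧ p < n ∧
      a = PreNode.enode i j x y p ∧ b = connFor i j false) ∨
  (∃ (i j : Fin κ) (x y : Fin n) (p : ℕ), n ≤ p ∧ p - n ≤ (y : ℕ) ∧
      a = PreNode.enode i j x y p ∧ b = connFor j i true) ∨
  (∃ (i j : Fin κ) (x y : Fin n) (p : ℕ), n ≤ p ∧ (y : ℕ) < p - n ∧
      a = PreNode.enode i j x y p ∧ b = connFor j i false)

/-- The graph `H` of the paths construction. -/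
def H : SimpleGraph (Node G) := SimpleGraph.fromRel (fun a b => Rel a.1 b.1)

/-- The initial configuration: all nodes of all path vertex-gadgets. -/
def initialS : Set (Node G) := {w | ∃ i x p, w.1 = PreNode.vnode i x p}

/-- The nodes of the path vertex-gadget for the vertex `(i, x)`. -/
def vertexGadgetNodes (i : Fin κ) (x : Fin n) : Set (Node G) :=
  {w | ∃ p, w.1 = PreNode.vnode i x p}

/-- The nodes of the path edge-gadget for the edge `(i,x)(j,y)`. -/
def edgeGadgetNodes (i j : Fin κ) (x y : Fin n) : Set (Node G) :=
  {w | ∃ p, w.1 = PreNode.enode i j x y p}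

/-- The gadget nodes: the nodes of all path vertex-gadgets and path
edge-gadgets (that is, all non-block non-connector nodes). -/
def gadgetNodes : Set (Node G) :=
  {w | (∃ i x p, w.1 = PreNode.vnode i x p) ∨ ∃ i j x y p, w.1 = PreNode.enode i j x y p}

/-- A paths solution: a set `T` of nodes with `|T| = |S|` satisfying
conditions (P1)–(P4). -/
def IsPathsSolution (T : Set (Node G)) : Prop :=
  T.ncard = (initialS G).ncard ∧
  -- (P1): no block or connector node is in `T`
  (∀ w ∈ T, w ∈ gadgetNodes G) ∧
  -- (P2): for each `i`, some node of a path vertex-gadget adjacent to `b_i`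
  -- is not in `T`
  (∀ i : Fin κ, ∃ w : Node G, (∃ x p, w.1 = PreNode.vnode i x p) ∧ w ∉ T) ∧
  -- (P3): for each pair `{i,j}`, some node of a path edge-gadget adjacent to
  -- `b_{i,j}` is in `T`
  (∀ i j : Fin κ, i < j → ∃ w : Node G, (∃ x y p, w.1 = PreNode.enode i j x y p) ∧ w ∈ T) ∧
  -- (P4): a gadget node is in `T` iff every gadget node at distance at most
  -- two from it in the subgraph induced by the gadget nodes is in `T`
  (∀ a : ↥(gadgetNodes G), (a : Node G) ∈ T ↔
      ∀ b : ↥(gadgetNodes G),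
        (∃ pw : (SimpleGraph.induce (gadgetNodes G) (H G)).Walk a b, pw.length ≤ 2) →
        (b : Node G) ∈ T)

/-- The Multicolored Clique instance is a yes-instance: there is a clique of
`G` with exactly one vertex from each color class. -/
def MCCYes : Prop :=
  ∃ f : Fin κ → Fin n, ∀ i j : Fin κ, i ≠ j → G.Adj (i, f i) (j, f j)

end PathsConstruction

/-- Every connected component of `K` is a path. -/
def ComponentsArePaths {W : Type*} (K : SimpleGraph W) : Prop :=
  ∀ C : K.ConnectedComponent, ∃ (N : ℕ) (g : Fin N ≃ C.supp),
    ∀ a b : Fin N, K.Adj (g a : W) (g b : W) ↔ ((a : ℕ) + 1 = (b : ℕ) ∨ (b : ℕ) + 1 = (a : ℕ))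

/-- `X` is a modulator to paths of `K`: every connected component of `K − X`
is a path. -/
def IsPathsModulator {W : Type*} (K : SimpleGraph W) (X : Set W) : Prop :=
  ComponentsArePaths (SimpleGraph.induce Xᶜ K)

/-- The modulator to paths number: the minimum size of a modulator to paths. -/
noncomputable def pathsModulatorNumber {W : Type*} (K : SimpleGraph W) : ℕ :=
  sInf {k | ∃ X : Set W, IsPathsModulator K X ∧ X.ncard = k}


/-!
Moving a token from a vertex-gadget to an edge-gadget takes at least two slides, and the `κ(κ - 1)`
halves of the edge-gadgets selected by (P3) and (P4) have `n` nodes each.  The budget is thus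
exactly twice the number of these nodes: the tokens ending there make two slides each, all others
rest.  The tokens of the vertex-gadget left empty in each class by (P2) and (P4) must move, so they
make two slides, through a connector.  Counting the tokens of one group on either side of its
`index` connector shows that the empty vertex-gadget and the selected edge-gadget belong to the same
vertex.
-/

namespace TokenDiscovery

variable {V α : Type*} {K : SimpleGraph V}

/-- Sums over finite sets of tokens are bounded, rather than the total, so that infinitely many
tokens are allowed. -/
theorem exists_walk_lengths {m : ℕ} {f : ℕ → α → V} (hf : ∀ i < m, Step K (f i) (f (i + 1))) :
    ∃ l : α → ℕ, (∀ s : Finset α, ∑ a ∈ s, l a ≤ m) ∧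
      ∀ a, ∃ w : K.Walk (f 0 a) (f m a), w.length = l a := by
  classical
  induction m with
  | zero => exact ⟨0, by simp, fun a => ⟨.nil, rfl⟩⟩
  | succ m ih =>
    obtain ⟨l, hl, hwalk⟩ := ih fun i hi => hf i (by omega)
    obtain ⟨moved, hadj, hrest⟩ := hf m (by omega)
    refine ⟨fun a => l a + if a = moved then 1 else 0, fun s => ?_, fun a => ?_⟩
    · rw [Finset.sum_add_distrib, Finset.sum_ite_eq']
      exact add_le_add (hl s) (by split_ifs <;> simp)
    · obtain ⟨w, hw⟩ := hwalk a
      by_cases ha : a = moved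
      · subst ha
        exact ⟨w.concat hadj, by simp [hw]⟩
      · rw [hrest a ha]
        exact ⟨w, by simp [ha, hw]⟩

theorem eq_and_eq_zero_of_sum_le {ι : Type*} [Fintype ι] {l : α → ℕ} {d : ℕ}
    (hl : ∀ s : Finset α, ∑ a ∈ s, l a ≤ d * Fintype.card ι) {t : ι → α}
    (ht : Function.Injective t) (hd : ∀ z, d ≤ l (t z)) :
    (∀ z, l (t z) = d) ∧ ∀ a ∉ Set.range t, l a = 0 := by
  classical
  have hconst : ∑ _z : ι, d = d * Fintype.card ι := by simp [mul_comm]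
  have hle : d * Fintype.card ι ≤ ∑ z, l (t z) := hconst ▸ Finset.sum_le_sum fun z _ => hd z
  have himage : ∑ a ∈ Finset.univ.image t, l a = ∑ z, l (t z) := Finset.sum_image ht.injOn
  refine ⟨fun z => ?_, fun a ha => ?_⟩
  · have heq : ∑ _z : ι, d = ∑ z, l (t z) :=
      hconst.trans (hle.antisymm (himage ▸ hl (Finset.univ.image t)))
    exact ((Finset.sum_eq_sum_iff_of_le fun z _ => hd z).1 heq z (Finset.mem_univ z)).symm
  · have hinsert := hl (insert a (Finset.univ.image t))
    rw [Finset.sum_insert (by simpa using ha), himage] at hinsert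
    omega

theorem Reachable.exists_walks_of_tight_budget {c₀ : α → V} {T : Set V} {b : ℕ}
    (h : Reachable K c₀ T b) {ι : Type*} [Fintype ι] {target : ι → V}
    (hinj : Function.Injective target) (htarget : ∀ z, target z ∈ T) {d : ℕ}
    (hdist : ∀ a z (w : K.Walk (c₀ a) (target z)), d ≤ w.length) (hb : b ≤ d * Fintype.card ι) :
    ∃ c : α → V, Function.Injective c ∧
      ∀ a, c₀ a ∉ T → ∃ z, c a = target z ∧ ∃ w : K.Walk (c₀ a) (target z), w.length = d := by
  obtain ⟨m, f, hm, rfl, hstep, hc, rfl⟩ := h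
  obtain ⟨l, hl, hwalk⟩ := exists_walk_lengths hstep
  choose token htoken using htarget
  have htoken_inj : Function.Injective token := fun z z' h => hinj (by rw [← htoken, h, htoken])
  have hd : ∀ z, d ≤ l (token z) := fun z => by
    obtain ⟨w, hw⟩ := hwalk (token z)
    rw [← hw, ← w.length_copy rfl (htoken z)]
    exact hdist _ z _
  obtain ⟨heq, hzero⟩ :=
    eq_and_eq_zero_of_sum_le (fun s => (hl s).trans (hm.trans hb)) htoken_inj hd
  refine ⟨f m, hc, fun a ha => ?_⟩
  obtain ⟨w, hw⟩ := hwalk a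
  obtain ⟨z, rfl⟩ : a ∈ Set.range token := by
    by_contra hrest
    rw [hzero a hrest] at hw
    exact ha ⟨a, (w.eq_of_length_eq_zero hw).symm⟩
  exact ⟨z, htoken z, w.copy rfl (htoken z), by rw [w.length_copy, hw, heq]⟩

end TokenDiscovery

namespace PathsConstruction

theorem eq_of_injective_of_le_iff_le {α : Type*} [LinearOrder α] [Finite α] {a b : α} {s : α → α}
    (hs : Function.Injective s) (h : ∀ q, q ≤ a ↔ s q ≤ b) : a = b := by
  have hcard : (Set.Iic a).ncard = (Set.Iic b).ncard := by
    have hpre : Set.Iic a = s ⁻¹' Set.Iic b := Set.ext h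
    rw [hpre, Set.ncard_preimage_of_injective_subset_range hs]
    simp [(Finite.surjective_of_injective hs).range_eq]
  rcases le_total a b with hab | hba
  · exact Set.Iic_injective
      (Set.eq_of_subset_of_ncard_le (Set.Iic_subset_Iic.2 hab) hcard.ge (Set.toFinite _))
  · exact (Set.Iic_injective
      (Set.eq_of_subset_of_ncard_le (Set.Iic_subset_Iic.2 hba) hcard.le (Set.toFinite _))).symm

theorem exists_symmetric_choice {ι α : Type*} [LinearOrder ι] [Nonempty α]
    {R : ι → ι → α → α → Prop} (hsymm : ∀ {i j x y}, R i j x y → R j i y x)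
    (h : ∀ i j, i < j → ∃ x y, R i j x y) :
    ∃ X : ι → ι → α, ∀ i j, i ≠ j → R i j (X i j) (X j i) := by
  choose! x y hxy using h
  let X i j := if i < j then x i j else y j i
  have hX {i j} (hij : i < j) : R i j (X i j) (X j i) := by
    simpa only [X, hij, hij.not_gt, if_true, if_false] using hxy i j hij
  exact ⟨X, fun i j hij => hij.lt_or_gt.elim hX fun hji => hsymm (hX hji)⟩

variable {κ n : ℕ}

/-- The nodes of the vertex-blocks: the teal block nodes and the path vertex-gadgets. -/
def InVertexBlock : PreNode κ n → Prop
  | .vblock _ | .vnode .. => True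
  | _ => False

/-- The nodes of the edge-blocks: the gray block nodes and the path edge-gadgets. -/
def InEdgeBlock : PreNode κ n → Prop
  | .eblock .. | .enode .. => True
  | _ => False

theorem InEdgeBlock.not_inVertexBlock {w : PreNode κ n} (h : InEdgeBlock w) :
    ¬ InVertexBlock w := by
  cases w <;> simp_all [InEdgeBlock, InVertexBlock]

theorem not_inVertexBlock_connFor (i j : Fin κ) (b : Bool) :
    ¬ InVertexBlock (connFor i j b : PreNode κ n) := by
  unfold connFor
  split_ifs <;> simp [InVertexBlock]

theorem not_inEdgeBlock_connFor (i j : Fin κ) (b : Bool) :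
    ¬ InEdgeBlock (connFor i j b : PreNode κ n) := by
  unfold connFor
  split_ifs <;> simp [InEdgeBlock]

theorem connFor_inj {i j i' j' : Fin κ} {b b' : Bool} :
    (connFor i j b : PreNode κ n) = connFor i' j' b' ↔ i = i' ∧ j = j' ∧ b = b' := by
  unfold connFor
  split_ifs <;> grind

namespace Rel

variable {a b : PreNode κ n} {i j : Fin κ} {x y : Fin n} {p : ℕ}

theorem inVertexBlock_left (h : Rel a b) (hb : InVertexBlock b) : InVertexBlock a := by
  unfold Rel at h
  grind [InVertexBlock, not_inVertexBlock_connFor]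

theorem inEdgeBlock_left (h : Rel a b) (hb : InEdgeBlock b) : InEdgeBlock a := by
  unfold Rel at h
  grind [InEdgeBlock, not_inEdgeBlock_connFor]

theorem of_vnode_left (h : Rel (.vnode i x p) b) :
    InVertexBlock b ∨ ∃ j : Fin κ, (j : ℕ) = classOfGroup i (p / n) ∧
      b = connFor i j (decide (p % n ≤ x)) := by
  unfold Rel at h
  grind [InVertexBlock]

theorem of_enode_left (h : Rel (.enode i j x y p) b) :
    InEdgeBlock b ∨ (p < n ∧ b = connFor i j (decide (p ≤ x))) ∨
      (n ≤ p ∧ b = connFor j i (decide (p - n ≤ y))) := by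
  unfold Rel at h
  grind (splits := 12) [InEdgeBlock]

end Rel

/-- The position of the group for class `j` in the path vertex-gadgets of class `i ≠ j`, the
inverse of `classOfGroup i`. -/
def groupOf (i j : Fin κ) : ℕ := if (j : ℕ) < i then j else j - 1

theorem classOfGroup_groupOf {i j : Fin κ} (h : i ≠ j) : classOfGroup i (groupOf i j) = j := by
  unfold classOfGroup groupOf
  grind

theorem groupOf_lt {i j : Fin κ} (h : i ≠ j) : groupOf i j < κ - 1 := by
  unfold groupOf
  grind

/-- A position `q` in the group for class `j` of a vertex of class `i ≠ j`.  It names a node both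
in each path vertex-gadget of class `i` and in each path edge-gadget of the pair `{i, j}`. -/
@[ext]
structure Slot (κ n : ℕ) where
  i : Fin κ
  j : Fin κ
  ne : i ≠ j
  q : Fin n

namespace Slot

/-- Slots as off-diagonal pairs of classes with a position; used to count them. -/
def equivOffDiag (κ n : ℕ) :
    Slot κ n ≃ {z : Fin κ × Fin κ // z ∈ (Finset.univ : Finset (Fin κ)).offDiag} × Fin n where
  toFun s := (⟨(s.i, s.j), by simpa using s.ne⟩, s.q)
  invFun z := ⟨z.1.1.1, z.1.1.2, (Finset.mem_offDiag.1 z.1.2).2.2, z.2⟩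

instance : Fintype (Slot κ n) := Fintype.ofEquiv _ (equivOffDiag κ n).symm

theorem card_eq : Fintype.card (Slot κ n) = n * (κ - 1) * κ := by
  rw [Fintype.card_congr (equivOffDiag κ n), Fintype.card_prod, Fintype.card_coe,
    Finset.offDiag_card, Finset.card_univ, Fintype.card_fin, Fintype.card_fin, mul_assoc,
    Nat.sub_one_mul, mul_comm]

/-- The node at slot `s` in the path vertex-gadget for the vertex `x` of class `s.i`. -/
def vertexNode (s : Slot κ n) (x : Fin n) : PreNode κ n :=
  .vnode s.i x (n * groupOf s.i s.j + s.q)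

/-- The node at slot `s` in the path edge-gadget for the edge between `x` in class `s.i` and `y` in
class `s.j`; the half for the smaller of the two classes comes first. -/
def edgeNode (s : Slot κ n) (x y : Fin n) : PreNode κ n :=
  if s.i < s.j then .enode s.i s.j x y s.q else .enode s.j s.i y x (n + s.q)

/-- The connector adjacent to slot `s` of the vertex `x` of class `s.i`, in the path vertex-gadget
for `x` as well as in the path edge-gadgets for the edges at `x`. -/
def connector (s : Slot κ n) (x : Fin n) : PreNode κ n := connFor s.i s.j (decide (s.q ≤ x))

variable {G : SimpleGraph (Fin κ × Fin n)} {s s' : Slot κ n} {x x' y y' : Fin n} {u v w : Node G}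

theorem connector_eq_iff :
    s.connector x = s'.connector x' ↔ s.i = s'.i ∧ s.j = s'.j ∧ (s.q ≤ x ↔ s'.q ≤ x') := by
  rw [connector, connector, connFor_inj, decide_eq_decide]

theorem valid_vertexNode (G : SimpleGraph (Fin κ × Fin n)) (s : Slot κ n) (x : Fin n) :
    Valid G (s.vertexNode x) :=
  calc n * groupOf s.i s.j + s.q < n * (groupOf s.i s.j + 1) := by rw [mul_add_one]; omega
    _ ≤ n * (κ - 1) := Nat.mul_le_mul_left n (groupOf_lt s.ne)

theorem valid_edgeNode (h : G.Adj (s.i, x) (s.j, y)) : Valid G (s.edgeNode x y) := by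
  unfold edgeNode
  split_ifs with hij
  · exact ⟨hij, h, by omega⟩
  · exact ⟨s.ne.symm.lt_of_le (not_lt.1 hij), h.symm, by omega⟩

theorem group_div (s : Slot κ n) : (n * groupOf s.i s.j + s.q) / n = groupOf s.i s.j := by
  rw [Nat.mul_add_div s.q.pos, Nat.div_eq_of_lt s.q.2, add_zero]

theorem group_mod (s : Slot κ n) : (n * groupOf s.i s.j + s.q) % n = s.q := by
  rw [Nat.mul_add_mod, Nat.mod_eq_of_lt s.q.2]

theorem eq_of_vertexNode_eq (h : s.vertexNode x = s'.vertexNode x') : s = s' := by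
  obtain ⟨hi, -, hp⟩ := PreNode.vnode.inj h
  have hgroup : groupOf s.i s.j = groupOf s'.i s'.j := by rw [← s.group_div, hp, s'.group_div]
  have hj : (s.j : ℕ) = s'.j := by
    rw [← classOfGroup_groupOf s.ne, ← classOfGroup_groupOf s'.ne, hgroup, hi]
  have hq : (s.q : ℕ) = s'.q := by rw [← s.group_mod, hp, s'.group_mod]
  exact Slot.ext hi (Fin.ext hj) (Fin.ext hq)

theorem eq_of_edgeNode_eq (h : s.edgeNode x y = s'.edgeNode x' y') : s = s' := by
  unfold edgeNode at h
  split_ifs at h <;> obtain ⟨h₁, h₂, -, -, hp⟩ := PreNode.enode.inj h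
  · exact Slot.ext h₁ h₂ (Fin.ext hp)
  · omega
  · omega
  · exact Slot.ext h₂ h₁ (Fin.ext (by omega))

theorem inVertexBlock_or_eq_connector_of_adj (hu : u.1 = s.vertexNode x) (h : (H G).Adj u w) :
    InVertexBlock w.1 ∨ w.1 = s.connector x := by
  obtain ⟨-, h | h⟩ := h <;> rw [hu] at h
  · refine h.of_vnode_left.imp_right ?_
    rintro ⟨j, hj, hw⟩
    rw [s.group_div, classOfGroup_groupOf s.ne] at hj
    rw [hw, s.group_mod, Fin.ext hj]
    rfl
  · exact .inl (h.inVertexBlock_left trivial)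

theorem inEdgeBlock_edgeNode (s : Slot κ n) (x y : Fin n) : InEdgeBlock (s.edgeNode x y) := by
  unfold edgeNode
  split_ifs <;> exact trivial

theorem inEdgeBlock_or_eq_connector_of_adj (hu : u.1 = s.edgeNode x y) (h : (H G).Adj u w) :
    InEdgeBlock w.1 ∨ w.1 = s.connector x := by
  obtain ⟨-, h | h⟩ := h <;> rw [hu] at h
  · unfold edgeNode at h
    split_ifs at h <;> refine h.of_enode_left.imp_right ?_
    · rintro (⟨-, hw⟩ | ⟨hq, -⟩)
      · exact hw
      · omega
    · rintro (⟨hq, -⟩ | ⟨-, hw⟩)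
      · omega
      · rwa [Nat.add_sub_cancel_left] at hw
  · exact .inl (h.inEdgeBlock_left (s.inEdgeBlock_edgeNode x y))

theorem two_le_walk_length (hu : u ∈ initialS G) (hv : v.1 = s.edgeNode x y) (w : (H G).Walk u v) :
    2 ≤ w.length := by
  have hu : InVertexBlock u.1 := by
    obtain ⟨i, z, p, hu⟩ := hu
    exact hu ▸ trivial
  by_contra! hw
  have hw : w.length = 0 ∨ w.length = 1 := by omega
  rcases hw with hw | hw
  · have huv : u = v := w.eq_of_length_eq_zero hw
    exact (s.inEdgeBlock_edgeNode x y).not_inVertexBlock (hv ▸ huv ▸ hu)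
  · have hadj : (H G).Adj v u := (w.adj_of_length_eq_one hw).symm
    rcases inEdgeBlock_or_eq_connector_of_adj hv hadj with hedge | hconn
    · exact hedge.not_inVertexBlock hu
    · exact not_inVertexBlock_connFor _ _ _ (hconn ▸ hu)

theorem connector_eq_of_walk (hu : u.1 = s.vertexNode x) (hv : v.1 = s'.edgeNode x' y')
    (w : (H G).Walk u v) (hw : w.length = 2) : s.connector x = s'.connector x' := by
  obtain ⟨c, huc, hvc⟩ := (H G).walkLengthTwoEquivCommonNeighbors u v ⟨w, hw⟩
  rcases inVertexBlock_or_eq_connector_of_adj hu huc with hvertex | hc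
  · rcases inEdgeBlock_or_eq_connector_of_adj hv hvc with hedge | hc'
    · exact absurd hvertex hedge.not_inVertexBlock
    · exact absurd (hc' ▸ hvertex) (not_inVertexBlock_connFor _ _ _)
  · rcases inEdgeBlock_or_eq_connector_of_adj hv hvc with hedge | hc'
    · exact absurd (hc ▸ hedge) (not_inEdgeBlock_connFor _ _ _)
    · exact hc.symm.trans hc'

theorem choice_eq_of_connector_eq {f : Fin κ → Fin n} {X : Fin κ → Fin κ → Fin n}
    {σ : Slot κ n → Slot κ n} (hσ : Function.Injective σ)
    (h : ∀ s, s.connector (f s.i) = (σ s).connector (X (σ s).i (σ s).j)) {i j : Fin κ}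
    (hij : i ≠ j) : f i = X i j := by
  have hpos (q : Fin n) := connector_eq_iff.1 (h ⟨i, j, hij, q⟩)
  refine eq_of_injective_of_le_iff_le (s := fun q => (σ ⟨i, j, hij, q⟩).q) (fun q q' hq => ?_)
    fun q => ?_
  · obtain ⟨hi, hj, -⟩ := hpos q
    obtain ⟨hi', hj', -⟩ := hpos q'
    have hslot := hσ (Slot.ext (hi.symm.trans hi') (hj.symm.trans hj') hq)
    exact (Slot.mk.inj hslot).2.2
  · obtain ⟨hi, hj, hq⟩ := hpos q
    rw [hq, ← hi, ← hj]

end Slot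

/-- The path vertex-gadget for the vertex `x` of class `i`, as a path in the subgraph of `H`
induced by the gadget nodes. -/
def vertexPath (G : SimpleGraph (Fin κ × Fin n)) (i : Fin κ) (x : Fin n) :
    SimpleGraph.pathGraph (n * (κ - 1)) →g (H G).induce (gadgetNodes G) where
  toFun p := ⟨⟨.vnode i x p, p.2⟩, Or.inl ⟨i, x, p, rfl⟩⟩
  map_rel' {p q} hpq := by
    have hsucc {p q : ℕ} (h : p + 1 = q) : Rel (PreNode.vnode i x p) (PreNode.vnode i x q) :=
      .inl ⟨i, x, p, rfl, by rw [h]⟩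
    refine ⟨fun h => hpq.ne (Fin.ext ?_), (SimpleGraph.pathGraph_adj.1 hpq).imp hsucc hsucc⟩
    exact (PreNode.vnode.inj (congrArg Subtype.val h)).2.2

/-- The path edge-gadget for the edge between `x` in class `i` and `y` in class `j`, as a path in
the subgraph of `H` induced by the gadget nodes. -/
def edgePath {G : SimpleGraph (Fin κ × Fin n)} {i j : Fin κ} {x y : Fin n} (hij : i < j)
    (hxy : G.Adj (i, x) (j, y)) :
    SimpleGraph.pathGraph (2 * n) →g (H G).induce (gadgetNodes G) where
  toFun p := ⟨⟨.enode i j x y p, hij, hxy, p.2⟩, Or.inr ⟨i, j, x, y, p, rfl⟩⟩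
  map_rel' {p q} hpq := by
    have hsucc {p q : ℕ} (h : p + 1 = q) :
        Rel (PreNode.enode i j x y p) (PreNode.enode i j x y q) :=
      .inr (.inr (.inr (.inr (.inl ⟨i, j, x, y, p, rfl, by rw [h]⟩))))
    refine ⟨fun h => hpq.ne (Fin.ext ?_), (SimpleGraph.pathGraph_adj.1 hpq).imp hsucc hsucc⟩
    exact (PreNode.enode.inj (congrArg Subtype.val h)).2.2.2.2

namespace IsPathsSolution

variable {G : SimpleGraph (Fin κ × Fin n)} {T : Set (Node G)}

theorem mem_of_reachable (hT : IsPathsSolution G T) {a b : gadgetNodes G}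
    (hab : ((H G).induce (gadgetNodes G)).Reachable a b) (ha : (a : Node G) ∈ T) :
    (b : Node G) ∈ T := by
  obtain ⟨-, -, -, -, P4⟩ := hT
  obtain ⟨w⟩ := hab
  induction w with
  | nil => exact ha
  | cons hadj _ ih => exact ih ((P4 _).1 ha _ ⟨hadj.toWalk, by simp⟩)

theorem mem_of_pathGraph_hom (hT : IsPathsSolution G T) {N : ℕ}
    (g : SimpleGraph.pathGraph N →g (H G).induce (gadgetNodes G)) {p q : Fin N}
    (hp : (g p : Node G) ∈ T) : (g q : Node G) ∈ T :=
  hT.mem_of_reachable ((SimpleGraph.pathGraph_preconnected N p q).map g) hp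

theorem exists_disjoint_vertexGadgetNodes (hT : IsPathsSolution G T) (i : Fin κ) :
    ∃ x, Disjoint (vertexGadgetNodes G i x) T := by
  have ⟨_, _, P2, _, _⟩ := hT
  obtain ⟨⟨_, hp⟩, ⟨x, p, rfl⟩, hpT⟩ := P2 i
  refine ⟨x, Set.disjoint_left.2 ?_⟩
  rintro ⟨_, hq⟩ ⟨q, rfl⟩ hqT
  exact hpT (hT.mem_of_pathGraph_hom (vertexPath G i x) (p := ⟨q, hq⟩) (q := ⟨p, hp⟩) hqT)

theorem exists_edgeGadgetNodes_subset (hT : IsPathsSolution G T) {i j : Fin κ} (hij : i < j) :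
    ∃ x y, G.Adj (i, x) (j, y) ∧ edgeGadgetNodes G i j x y ⊆ T := by
  have ⟨_, _, _, P3, _⟩ := hT
  obtain ⟨⟨_, hp⟩, ⟨x, y, p, rfl⟩, hpT⟩ := P3 i j hij
  refine ⟨x, y, hp.2.1, ?_⟩
  rintro ⟨_, hq⟩ ⟨q, rfl⟩
  exact hT.mem_of_pathGraph_hom (edgePath hij hp.2.1) (p := ⟨p, hp.2.2⟩) (q := ⟨q, hq.2.2⟩) hpT

theorem exists_edge_choice (hT : IsPathsSolution G T) :
    ∃ X : Fin κ → Fin κ → Fin n, (∀ i j, i ≠ j → G.Adj (i, X i j) (j, X j i)) ∧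
      ∀ (s : Slot κ n) (w : Node G), w.1 = s.edgeNode (X s.i s.j) (X s.j s.i) → w ∈ T := by
  rcases isEmpty_or_nonempty (Fin κ) with _ | ⟨⟨i₀⟩⟩
  · exact ⟨isEmptyElim, isEmptyElim, fun s => isEmptyElim s.i⟩
  have : Nonempty (Fin n) := (hT.exists_disjoint_vertexGadgetNodes i₀).nonempty
  -- One of the two gadgets is empty, as edge-gadget nodes list the smaller class first.
  obtain ⟨X, hX⟩ := exists_symmetric_choice
    (R := fun i j x y => G.Adj (i, x) (j, y) ∧
      edgeGadgetNodes G i j x y ∪ edgeGadgetNodes G j i y x ⊆ T)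
    (fun h => ⟨h.1.symm, Set.union_comm _ _ ▸ h.2⟩) (fun i j hij => by
      obtain ⟨x, y, hxy, hsub⟩ := hT.exists_edgeGadgetNodes_subset hij
      refine ⟨x, y, hxy, Set.union_subset hsub ?_⟩
      rintro ⟨_, hq⟩ ⟨q, rfl⟩
      exact absurd hq.1 hij.not_gt)
  refine ⟨X, fun i j hij => (hX i j hij).1, fun s w hw => (hX s.i s.j s.ne).2 ?_⟩
  unfold Slot.edgeNode at hw
  split_ifs at hw
  · exact Or.inl ⟨_, hw⟩
  · exact Or.inr ⟨_, hw⟩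

end IsPathsSolution

end PathsConstruction

open PathsConstruction in
/-- If in the graph of the paths construction some paths solution is reachable
from the initial configuration within `2n(κ−1)κ` token slides in the discovery
token sliding model, then the Multicolored Clique instance is a yes-instance. -/
theorem mcc_yes_of_paths_solution {κ n : ℕ} (G : SimpleGraph (Fin κ × Fin n))
    (h : ∃ T : Set (Node G), IsPathsSolution G T ∧
      TokenDiscovery.Reachable (H G) (fun a : ↥(initialS G) => (a : Node G)) T
        (2 * n * (κ - 1) * κ)) :
    MCCYes G := by
  obtain ⟨T, hT, hreach⟩ := h
  choose f hf using hT.exists_disjoint_vertexGadgetNodes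
  obtain ⟨X, hXadj, hXT⟩ := hT.exists_edge_choice
  let source (s : Slot κ n) : initialS G := ⟨⟨_, s.valid_vertexNode G (f s.i)⟩, _, _, _, rfl⟩
  let target (s : Slot κ n) : Node G := ⟨_, Slot.valid_edgeNode (hXadj s.i s.j s.ne)⟩
  have hsource (s) : (source s : Node G) ∉ T := Set.disjoint_left.1 (hf s.i) ⟨_, rfl⟩
  obtain ⟨c, hc, hwalk⟩ := hreach.exists_walks_of_tight_budget (target := target) (d := 2)
    (fun s s' h => Slot.eq_of_edgeNode_eq (congrArg Subtype.val h)) (fun s => hXT s _ rfl)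
    (fun a s => Slot.two_le_walk_length a.2 rfl) (by rw [Slot.card_eq]; exact (by ring : _ = _).le)
  choose σ hσ w hw using fun s => hwalk (source s) (hsource s)
  have hσ_inj : Function.Injective σ := fun s s' h => by
    have hsources : source s = source s' := hc (by rw [hσ, hσ, h])
    exact Slot.eq_of_vertexNode_eq (congrArg (fun a => a.1.1) hsources)
  have hfX {i j} (hij : i ≠ j) : f i = X i j :=
    Slot.choice_eq_of_connector_eq hσ_inj (fun s => Slot.connector_eq_of_walk rfl rfl (w s) (hw s))
      hij
  refine ⟨f, fun i j hij => ?_⟩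
  rw [hfX hij, hfX hij.symm]
  exact hXadj i j hij
end

section
/- For the graph H of the twin-cover construction obtained from an Arc Supply instance (D, δ, L), the set consisting of all purple vertex nodes and all black arc nodes is a twin cover of H; consequently the twin cover number of H is at most |V(D)| + 2|A(D)|. -/
namespace TwinCoverConstruction

/-- An Arc Supply instance: a loopless digraph with no double arcs, a demand
for each vertex, and a nonempty list of supply pairs for each arc. -/
structure Instance (V : Type*) [Fintype V] [DecidableEq V] where
  /-- the arcs of the digraph -/
  arcs : Finset (V × V)
  loopless : ∀ u : V, (u, u) ∉ arcs
  noDouble : ∀ u v : V, (u, v) ∈ arcs → (v, u) ∉ arcs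
  /-- the demand of each vertex -/
  demand : V → ℕ
  /-- the list of supply pairs of each arc -/
  supply : V × V → List (ℕ × ℕ)
  supply_nonempty : ∀ a ∈ arcs, supply a ≠ []

variable {V : Type*} [Fintype V] [DecidableEq V]

/-- The Arc Supply instance is a yes-instance: one can select a supply pair
from the list of each arc so that the supplies sent to each vertex sum up
exactly to its demand. -/
def Instance.Yes (I : Instance V) : Prop :=
  ∃ ρ : V × V → ℕ × ℕ, (∀ a ∈ I.arcs, ρ a ∈ I.supply a) ∧
    ∀ u : V, I.demand u =
      (∑ a ∈ I.arcs.filter (fun a => a.1 = u), (ρ a).1) +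
      (∑ a ∈ I.arcs.filter (fun a => a.2 = u), (ρ a).2)

/-- `Σ`: twice the sum of all demands and of all entries of all supply pairs. -/
def Instance.sigma (I : Instance V) : ℕ :=
  2 * ((∑ u : V, I.demand u) +
    ∑ a ∈ I.arcs, ((I.supply a).map (fun p => p.1 + p.2)).sum)

/-- The number of supply nodes of the supply clique of side `s` and (0-based)
list index `i` of an arc: the corresponding component of the `i`-th supply
pair. -/
def Instance.xval (I : Instance V) (a : V × V) (s : Bool) (i : ℕ) : ℕ :=
  if s then ((I.supply a).getD i (0, 0)).2 else ((I.supply a).getD i (0, 0)).1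

/-- The number of index nodes of the supply clique of side `s` and (0-based)
list index `i` of an arc: `Σ² − Σ·i` on the tail side and `Σ·i` on the head
side. -/
def Instance.idxCount (I : Instance V) (a : V × V) (s : Bool) (i : ℕ) : ℕ :=
  if s then I.sigma * i else I.sigma ^ 2 - I.sigma * i

/-- Pre-nodes of the twin-cover construction. -/
inductive PreNode (V : Type*) : Type _
  /-- the purple vertex node for `u` -/
  | vnode (u : V)
  /-- the `p`-th yellow node of the demand clique for `u` (`p < δ(u)`) -/
  | demandN (u : V) (p : ℕ)
  /-- a black arc node of the arc `a` (`side = false` for the tail `u`,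
  `side = true` for the head `v`) -/
  | arcnode (a : V × V) (side : Bool)
  /-- the `p`-th brown node of the reservoir clique for `a` (`p < Σ²`) -/
  | reservoir (a : V × V) (p : ℕ)
  /-- the `p`-th orange supply node of the supply clique of side `side` and
  list index `i` for the arc `a` -/
  | supplyN (a : V × V) (side : Bool) (i p : ℕ)
  /-- the `p`-th teal index node of the supply clique of side `side` and list
  index `i` for the arc `a` -/
  | indexN (a : V × V) (side : Bool) (i p : ℕ)

/-- The pre-nodes actually present in the twin-cover construction. -/
def Valid (I : Instance V) : PreNode V → Prop
  | PreNode.vnode _ => True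
  | PreNode.demandN u p => p < I.demand u
  | PreNode.arcnode a _ => a ∈ I.arcs
  | PreNode.reservoir a p => a ∈ I.arcs ∧ p < I.sigma ^ 2
  | PreNode.supplyN a s i p => a ∈ I.arcs ∧ i < (I.supply a).length ∧ p < I.xval a s i
  | PreNode.indexN a s i p => a ∈ I.arcs ∧ i < (I.supply a).length ∧ p < I.idxCount a s i

/-- Nodes of the twin-cover construction. -/
abbrev Node (I : Instance V) := {w : PreNode V // Valid I w}

/-- The endpoint of the arc `a` selected by `side`. -/
def endpoint (a : V × V) (side : Bool) : V := if side then a.2 else a.1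

/-- The base adjacency relation of the twin-cover construction (to be
symmetrized). -/
def Rel : PreNode V → PreNode V → Prop := fun w z =>
  (∃ u p, w = PreNode.demandN u p ∧ z = PreNode.vnode u) ∨
  (∃ u p q, w = PreNode.demandN u p ∧ z = PreNode.demandN u q) ∨
  (∃ a p q, w = PreNode.reservoir a p ∧ z = PreNode.reservoir a q) ∨
  (∃ a s p, w = PreNode.reservoir a p ∧ z = PreNode.arcnode a s) ∨
  (∃ a s i p q, w = PreNode.supplyN a s i p ∧ z = PreNode.supplyN a s i q) ∨
  (∃ a s i p q, w = PreNode.supplyN a s i p ∧ z = PreNode.indexN a s i q) ∨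
  (∃ a s i p q, w = PreNode.indexN a s i p ∧ z = PreNode.indexN a s i q) ∨
  (∃ a s i p, w = PreNode.supplyN a s i p ∧ z = PreNode.vnode (endpoint a s)) ∨
  (∃ a s i p, w = PreNode.indexN a s i p ∧ z = PreNode.vnode (endpoint a s)) ∨
  (∃ a s i p, w = PreNode.supplyN a s i p ∧ z = PreNode.arcnode a s) ∨
  (∃ a s i p, w = PreNode.indexN a s i p ∧ z = PreNode.arcnode a s)

/-- The graph `H` of the twin-cover construction. -/
def H (I : Instance V) : SimpleGraph (Node I) :=
  SimpleGraph.fromRel (fun a b => Rel a.1 b.1)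

/-- The initial configuration: all orange supply nodes and all brown reservoir
nodes. -/
def initialS (I : Instance V) : Set (Node I) :=
  {w | (∃ a s i p, w.1 = PreNode.supplyN a s i p) ∨ ∃ a p, w.1 = PreNode.reservoir a p}

/-- A twin-cover solution: a set `T` of nodes with `|T| = |S|` satisfying
conditions (T1)–(T4). -/
def IsTCSolution (I : Instance V) (T : Set (Node I)) : Prop :=
  T.ncard = (initialS I).ncard ∧
  -- (T1): every yellow node is in `T`
  (∀ w : Node I, (∃ u p, w.1 = PreNode.demandN u p) → w ∈ T) ∧
  -- (T2): no brown node is in `T`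
  (∀ w : Node I, (∃ a p, w.1 = PreNode.reservoir a p) → w ∉ T) ∧
  -- (T3): for each arc and each of its two arc nodes, among the adjacent
  -- supply cliques containing at least one orange node, exactly one has all
  -- of its teal nodes in `T` and none of its orange nodes in `T`, and every
  -- other such supply clique has all of its orange nodes in `T` and none of
  -- its teal nodes in `T`
  (∀ a ∈ I.arcs, ∀ s : Bool, ∃ i₀ : ℕ, i₀ < (I.supply a).length ∧ 0 < I.xval a s i₀ ∧
      (∀ w : Node I, (∃ p, w.1 = PreNode.indexN a s i₀ p) → w ∈ T) ∧
      (∀ w : Node I, (∃ p, w.1 = PreNode.supplyN a s i₀ p) → w ∉ T) ∧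
      (∀ i : ℕ, i < (I.supply a).length → 0 < I.xval a s i → i ≠ i₀ →
        (∀ w : Node I, (∃ p, w.1 = PreNode.supplyN a s i p) → w ∈ T) ∧
        (∀ w : Node I, (∃ p, w.1 = PreNode.indexN a s i p) → w ∉ T))) ∧
  -- (T4): no purple or black node is in `T`
  (∀ w : Node I, ((∃ u, w.1 = PreNode.vnode u) ∨ ∃ a s, w.1 = PreNode.arcnode a s) → w ∉ T)

/-- The discovery budget `b = 2Δ + |A(D)| · 2Σ²`. -/
def Instance.budget (I : Instance V) : ℕ :=
  2 * (∑ u : V, I.demand u) + I.arcs.card * (2 * I.sigma ^ 2)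

end TwinCoverConstruction

/-- `X` is a twin cover of `K`: every connected component of `K − X` is a
clique all of whose vertices are pairwise twins in `K` (they have the same
closed neighborhood in `K`). -/
def IsTwinCover {W : Type*} (K : SimpleGraph W) (X : Set W) : Prop :=
  ∀ (a b : W) (ha : a ∈ Xᶜ) (hb : b ∈ Xᶜ),
    (SimpleGraph.induce Xᶜ K).Reachable ⟨a, ha⟩ ⟨b, hb⟩ →
      ∀ w : W, (w = a ∨ K.Adj a w) ↔ (w = b ∨ K.Adj b w)

/-- The twin cover number: the minimum size of a twin cover. -/
noncomputable def twinCoverNumber {W : Type*} (K : SimpleGraph W) : ℕ :=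
  sInf {k | ∃ X : Set W, IsTwinCover K X ∧ X.ncard = k}

/-! Outside the purple and black nodes, the construction consists of pairwise non-adjacent cliques,
and all nodes of one clique are attached to the same purple and black nodes. The closed
neighborhood of such a node therefore depends only on its clique, which is what makes two adjacent
ones twins. -/

theorem isTwinCover_iff_forall_adj {W : Type*} {K : SimpleGraph W} {X : Set W} :
    IsTwinCover K X ↔ ∀ ⦃a⦄, a ∉ X → ∀ ⦃b⦄, b ∉ X → K.Adj a b →
      insert a (K.neighborSet a) = insert b (K.neighborSet b) := by
  constructor
  · intro h a ha b hb hab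
    have hreach : (K.induce Xᶜ).Reachable ⟨a, ha⟩ ⟨b, hb⟩ := SimpleGraph.Adj.reachable hab
    exact Set.ext (h a b ha hb hreach)
  · rintro h a b ha hb ⟨p⟩
    suffices hp : ∀ {x y : ↥Xᶜ}, (K.induce Xᶜ).Walk x y →
        insert x.1 (K.neighborSet x) = insert y.1 (K.neighborSet y) from Set.ext_iff.mp (hp p)
    intro x y p
    induction p with
    | nil => rfl
    | @cons x z _ hxz _ ih => exact (h x.2 z.2 hxz).trans ih

theorem twinCoverNumber_le_ncard {W : Type*} {K : SimpleGraph W} {X : Set W}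
    (hX : IsTwinCover K X) : twinCoverNumber K ≤ X.ncard :=
  Nat.sInf_le ⟨X, hX, rfl⟩

namespace TwinCoverConstruction

section PreNode

variable {V : Type*}

/-- The names of the cliques of the construction, used to sort its nodes by clique. The supply
clique of an arc is named by its side and list index, as in `PreNode`. -/
inductive CliqueName (V : Type*) : Type _
  | demand (u : V)
  | reservoir (a : V × V)
  | supply (a : V × V) (side : Bool) (i : ℕ)

/-- The clique to which a pre-node belongs; it is `none` for the purple and black nodes, which form
the twin cover. -/
def PreNode.cliqueName : PreNode V → Option (CliqueName V)
  | vnode _ => none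
  | demandN u _ => some (.demand u)
  | arcnode _ _ => none
  | reservoir a _ => some (.reservoir a)
  | supplyN a s i _ => some (.supply a s i)
  | indexN a s i _ => some (.supply a s i)

/-- The purple and black nodes to which every node of a clique is adjacent. -/
def CliqueName.attachment : CliqueName V → Set (PreNode V)
  | demand u => {.vnode u}
  | reservoir a => {w | ∃ s, w = .arcnode a s}
  | supply a s _ => {.vnode (endpoint a s), .arcnode a s}

theorem PreNode.cliqueName_eq_none_iff {w : PreNode V} :
    w.cliqueName = none ↔ (∃ u, w = vnode u) ∨ ∃ a s, w = arcnode a s := by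
  cases w <;> simp [cliqueName]

theorem CliqueName.cliqueName_eq_none_of_mem_attachment {c : CliqueName V} {w : PreNode V}
    (hw : w ∈ c.attachment) : w.cliqueName = none := by
  rw [PreNode.cliqueName_eq_none_iff]
  cases c with
  | demand u => exact .inl ⟨u, hw⟩
  | reservoir a =>
    obtain ⟨s, rfl⟩ := hw
    exact .inr ⟨a, s, rfl⟩
  | supply a s i =>
    obtain rfl | rfl := hw
    · exact .inl ⟨_, rfl⟩
    · exact .inr ⟨a, s, rfl⟩

theorem not_rel_of_cliqueName_eq_none {w : PreNode V} (hw : w.cliqueName = none) (z : PreNode V) :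
    ¬ Rel w z := by
  cases w <;> simp_all [Rel, PreNode.cliqueName]

theorem rel_iff_mem_attachment {w z : PreNode V} {c : CliqueName V} (hw : w.cliqueName = some c)
    (hz : z.cliqueName = none) : Rel w z ↔ z ∈ c.attachment := by
  cases w <;> cases hw <;> cases z <;> cases hz <;>
    simp [Rel, CliqueName.attachment, -Prod.exists, -Bool.exists_bool, eq_comm]

theorem eq_or_rel_iff_cliqueName_eq {w z : PreNode V} {c d : CliqueName V}
    (hw : w.cliqueName = some c) (hz : z.cliqueName = some d) :
    (z = w ∨ Rel w z ∨ Rel z w) ↔ d = c := by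
  cases w <;> cases hw <;> cases z <;> cases hz <;>
    simp +contextual [Rel, -Prod.exists, -Bool.exists_bool, eq_comm]

theorem eq_or_rel_iff_cliqueName_eq_or_mem_attachment {w : PreNode V} {c : CliqueName V}
    (hw : w.cliqueName = some c) (z : PreNode V) :
    (z = w ∨ Rel w z ∨ Rel z w) ↔ z.cliqueName = some c ∨ z ∈ c.attachment := by
  cases hz : z.cliqueName with
  | none =>
    have hzw : z ≠ w := fun h => by simp_all
    simp [hzw, not_rel_of_cliqueName_eq_none hz, rel_iff_mem_attachment hw hz]
  | some d =>
    have hzc : z ∉ c.attachment := fun h => by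
      simp_all [CliqueName.cliqueName_eq_none_of_mem_attachment h]
    simp [hzc, eq_or_rel_iff_cliqueName_eq hw hz]

end PreNode

variable {V : Type*} [Fintype V] [DecidableEq V] {I : Instance V}

theorem mem_insert_neighborSet_H {w z : Node I} :
    z ∈ insert w ((H I).neighborSet w) ↔ z.1 = w.1 ∨ Rel w.1 z.1 ∨ Rel z.1 w.1 := by
  simp only [Set.mem_insert_iff, SimpleGraph.mem_neighborSet, H, SimpleGraph.fromRel_adj, ne_eq,
    Subtype.ext_iff]
  tauto

theorem insert_neighborSet_H_of_cliqueName_eq_some {w : Node I} {c : CliqueName V}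
    (hw : w.1.cliqueName = some c) :
    insert w ((H I).neighborSet w) = {z | z.1.cliqueName = some c ∨ z.1 ∈ c.attachment} :=
  Set.ext fun z => mem_insert_neighborSet_H.trans <|
    eq_or_rel_iff_cliqueName_eq_or_mem_attachment hw z.1

variable (I) in
/-- The set of all purple vertex nodes and all black arc nodes. -/
def coverNodes : Set (Node I) :=
  {w | (∃ u, w.1 = PreNode.vnode u) ∨ ∃ a s, w.1 = PreNode.arcnode a s}

theorem exists_cliqueName_eq_some_of_notMem_coverNodes {w : Node I} (hw : w ∉ coverNodes I) :
    ∃ c, w.1.cliqueName = some c :=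
  Option.ne_none_iff_exists'.mp (mt PreNode.cliqueName_eq_none_iff.mp hw)

variable (I)

theorem isTwinCover_coverNodes : IsTwinCover (H I) (coverNodes I) := by
  refine isTwinCover_iff_forall_adj.mpr fun w hw z hz hwz => ?_
  obtain ⟨c, hc⟩ := exists_cliqueName_eq_some_of_notMem_coverNodes hw
  have hz_mem : z.1.cliqueName = some c ∨ z.1 ∈ c.attachment :=
    (insert_neighborSet_H_of_cliqueName_eq_some hc).subset (Set.mem_insert_of_mem w hwz)
  have hzc : z.1.cliqueName = some c := hz_mem.resolve_right fun h =>
    hz (PreNode.cliqueName_eq_none_iff.mp (CliqueName.cliqueName_eq_none_of_mem_attachment h))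
  rw [insert_neighborSet_H_of_cliqueName_eq_some hc, insert_neighborSet_H_of_cliqueName_eq_some hzc]

/-- The purple node of each vertex and the two black nodes of each arc, enumerating `coverNodes`
without repetition. -/
def coverNode : V ⊕ I.arcs × Bool → Node I
  | .inl u => ⟨.vnode u, trivial⟩
  | .inr (a, s) => ⟨.arcnode a s, a.2⟩

theorem coverNode_injective : Function.Injective (coverNode I) := by
  rintro (u | ⟨⟨a, ha⟩, s⟩) (v | ⟨⟨b, hb⟩, t⟩) h <;> cases h <;> rfl

theorem range_coverNode : Set.range (coverNode I) = coverNodes I := by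
  ext w
  constructor
  · rintro ⟨u | ⟨a, s⟩, rfl⟩
    · exact .inl ⟨u, rfl⟩
    · exact .inr ⟨a, s, rfl⟩
  · obtain ⟨w, hw⟩ := w
    rintro (⟨u, rfl⟩ | ⟨a, s, rfl⟩)
    · exact ⟨.inl u, rfl⟩
    · exact ⟨.inr (⟨a, hw⟩, s), rfl⟩

theorem ncard_coverNodes : (coverNodes I).ncard = Fintype.card V + 2 * I.arcs.card := by
  calc (coverNodes I).ncard
      = Nat.card (V ⊕ I.arcs × Bool) := by
        rw [← range_coverNode, Set.ncard_range_of_injective (coverNode_injective I)]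
    _ = Fintype.card V + 2 * I.arcs.card := by simp [mul_comm]

end TwinCoverConstruction

open TwinCoverConstruction in
/-- For the graph `H` of the twin-cover construction, the set of all purple
vertex nodes and all black arc nodes is a twin cover of `H`; consequently the
twin cover number of `H` is at most `|V(D)| + 2|A(D)|`. -/
theorem twin_cover_number_le {V : Type*} [Fintype V] [DecidableEq V] (I : Instance V) :
    IsTwinCover (H I)
      {w : Node I | (∃ u, w.1 = PreNode.vnode u) ∨ ∃ a s, w.1 = PreNode.arcnode a s} ∧
    twinCoverNumber (H I) ≤ Fintype.card V + 2 * I.arcs.card := by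
  have hcover : IsTwinCover (H I) (coverNodes I) := isTwinCover_coverNodes I
  exact ⟨hcover, (twinCoverNumber_le_ncard hcover).trans_eq (ncard_coverNodes I)⟩
end

section
/- For the graph H of the bandwidth construction obtained from an Arc Supply instance (D, δ, L) in which every vertex of D has total degree at most four and all supply lists have the same length t, the bandwidth satisfies bw(H) ≤ 66κ, where κ = |V(D)| + |A(D)|. -/
namespace BandwidthConstruction

/-- An Arc Supply instance suitable for the bandwidth construction: a loopless
digraph with no double arcs in which every vertex has total degree at most
four, a demand for each vertex, a nonempty list of supply pairs of common
length `t` for each arc, together with an assignment of a distinct type among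
`a, b, c, d` (represented by `Fin 4`) to each neighbor of each vertex. -/
structure Instance (V : Type*) [Fintype V] [DecidableEq V] where
  /-- the arcs of the digraph -/
  arcs : Finset (V × V)
  loopless : ∀ u : V, (u, u) ∉ arcs
  noDouble : ∀ u v : V, (u, v) ∈ arcs → (v, u) ∉ arcs
  /-- the demand of each vertex -/
  demand : V → ℕ
  /-- the list of supply pairs of each arc -/
  supply : V × V → List (ℕ × ℕ)
  supply_nonempty : ∀ a ∈ arcs, supply a ≠ []
  /-- the common length of all supply lists -/
  t : ℕ
  supply_len : ∀ a ∈ arcs, (supply a).length = t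
  /-- every vertex has total (in- plus out-) degree at most four -/
  deg_le_four : ∀ u : V, (arcs.filter (fun a => a.1 = u ∨ a.2 = u)).card ≤ 4
  /-- the type assigned to each neighbor of each vertex -/
  typ : V → V → Fin 4
  typ_inj : ∀ u v w : V, ((u, v) ∈ arcs ∨ (v, u) ∈ arcs) →
    ((u, w) ∈ arcs ∨ (w, u) ∈ arcs) → typ u v = typ u w → v = w

variable {V : Type*} [Fintype V] [DecidableEq V]

/-- The Arc Supply instance is a yes-instance: one can select a supply pair
from the list of each arc so that the supplies sent to each vertex sum up
exactly to its demand. -/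
def Instance.Yes (I : Instance V) : Prop :=
  ∃ ρ : V × V → ℕ × ℕ, (∀ a ∈ I.arcs, ρ a ∈ I.supply a) ∧
    ∀ u : V, I.demand u =
      (∑ a ∈ I.arcs.filter (fun a => a.1 = u), (ρ a).1) +
      (∑ a ∈ I.arcs.filter (fun a => a.2 = u), (ρ a).2)

/-- `Σ`: three times the sum of all demands and of all entries of all supply
pairs. -/
def Instance.sg (I : Instance V) : ℕ :=
  3 * ((∑ u : V, I.demand u) +
    ∑ a ∈ I.arcs, ((I.supply a).map (fun p => p.1 + p.2)).sum)

/-- The length `4Σ(t+1)` of the side rails of the vertex-gadgets. -/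
def Instance.vlen (I : Instance V) : ℕ := 4 * I.sg * (I.t + 1)

/-- The length `4Σt` of the side rails of the arc-gadgets. -/
def Instance.alen (I : Instance V) : ℕ := 4 * I.sg * I.t

/-- The number of orange token-bearing nodes of the side `s` of the sub-ladder
of (0-based, from the top) index `k` of an arc-gadget: the corresponding
component of the `k`-th supply pair. -/
def Instance.xval (I : Instance V) (a : V × V) (s : Bool) (k : ℕ) : ℕ :=
  if s then ((I.supply a).getD k (0, 0)).2 else ((I.supply a).getD k (0, 0)).1

/-- The (0-based, from the top) sub-ladder index of the position `p`
(measured from the bottom) on a side rail of an arc-gadget. -/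
def Instance.subIdx (I : Instance V) (p : ℕ) : ℕ := I.t - 1 - p / (4 * I.sg)

/-- Pre-nodes of the bandwidth construction.  All positions `p` on side rails
are measured from the bottom (`p = 0` is the bottommost node). -/
inductive PreNode (V : Type*) : Type _
  /-- the `p`-th node of the isolated side rail of the vertex-gadget for `u` -/
  | iso (u : V) (p : ℕ)
  /-- the `p`-th node of the connected side rail of the vertex-gadget for `u` -/
  | con (u : V) (p : ℕ)
  /-- the `q`-th internal (gray spacer) node of the `p`-th rung of the
  vertex-gadget for `u` (`q < 3`) -/
  | vspacer (u : V) (p q : ℕ)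
  /-- the `p`-th node of the side rail of side `s` of the arc-gadget for `a`
  (`s = false` is the tail side, `s = true` the head side) -/
  | rail (a : V × V) (s : Bool) (p : ℕ)
  /-- the `q`-th internal (gray spacer) node of the rung of the sub-ladder of
  (0-based, from the top) index `k` of the arc-gadget for `a` (`q < 5`) -/
  | aspacer (a : V × V) (k q : ℕ)

/-- The pre-nodes actually present in the bandwidth construction. -/
def Valid (I : Instance V) : PreNode V → Prop
  | PreNode.iso _ p => p < I.vlen
  | PreNode.con _ p => p < I.vlen
  | PreNode.vspacer _ p q => p < I.vlen ∧ q < 3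
  | PreNode.rail a _ p => a ∈ I.arcs ∧ p < I.alen
  | PreNode.aspacer a k q => a ∈ I.arcs ∧ k < I.t ∧ q < 5

/-- Nodes of the bandwidth construction. -/
abbrev Node (I : Instance V) := {w : PreNode V // Valid I w}

/-- The endpoint of the arc `a` selected by `side`. -/
def endpoint (a : V × V) (side : Bool) : V := if side then a.2 else a.1

/-- Yellow demand nodes: the `δ(u)` topmost nodes of the connected side rail. -/
def Yellow (I : Instance V) : PreNode V → Prop := fun w =>
  ∃ u p, w = PreNode.con u p ∧ I.vlen - I.demand u ≤ p ∧ p < I.vlen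

/-- Purple nodes: the non-yellow nodes of the connected side rails. -/
def Purple (I : Instance V) : PreNode V → Prop := fun w =>
  ∃ u p, w = PreNode.con u p ∧ p < I.vlen - I.demand u

/-- Brown reservoir nodes: the `δ(u)` bottommost nodes of the isolated side
rail. -/
def Brown (I : Instance V) : PreNode V → Prop := fun w =>
  ∃ u p, w = PreNode.iso u p ∧ p < I.demand u

/-- Teal nodes: the non-brown nodes of the isolated side rails. -/
def Teal (I : Instance V) : PreNode V → Prop := fun w =>
  ∃ u p, w = PreNode.iso u p ∧ I.demand u ≤ p ∧ p < I.vlen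

/-- Orange token-bearing nodes of the arc-gadgets: within its sub-ladder,
above the black rung node come three gray spacer nodes, then the orange nodes
separated by three gray spacer nodes each. -/
def Orange (I : Instance V) : PreNode V → Prop := fun w =>
  ∃ a s p, w = PreNode.rail a s p ∧ p < I.alen ∧
    p % (4 * I.sg) % 4 = 0 ∧ 4 ≤ p % (4 * I.sg) ∧
    p % (4 * I.sg) ≤ 4 * I.xval a s (I.subIdx p)

/-- Black rung nodes of the arc-gadgets: the bottommost node of each side rail
of each sub-ladder. -/
def Black (I : Instance V) : PreNode V → Prop := fun w =>
  ∃ a s p, w = PreNode.rail a s p ∧ p < I.alen ∧ p % (4 * I.sg) = 0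

/-- Gray spacer nodes: the internal nodes of all rungs together with the
side-rail nodes of arc-gadgets that are neither black nor orange. -/
def Gray (I : Instance V) : PreNode V → Prop := fun w =>
  (∃ u p q, w = PreNode.vspacer u p q) ∨ (∃ a k q, w = PreNode.aspacer a k q) ∨
  (∃ a s p, w = PreNode.rail a s p ∧ ¬ Orange I w ∧ ¬ Black I w)

/-- The base adjacency relation of the bandwidth construction (to be
symmetrized). -/
def Rel (I : Instance V) : PreNode V → PreNode V → Prop := fun w z =>
  -- the side rails are paths
  (∃ u p, w = PreNode.iso u p ∧ z = PreNode.iso u (p + 1)) ∨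
  (∃ u p, w = PreNode.con u p ∧ z = PreNode.con u (p + 1)) ∨
  (∃ a s p, w = PreNode.rail a s p ∧ z = PreNode.rail a s (p + 1)) ∨
  -- the rungs of the vertex-gadgets (paths of length four)
  (∃ u p, w = PreNode.iso u p ∧ z = PreNode.vspacer u p 0) ∨
  (∃ u p q, w = PreNode.vspacer u p q ∧ z = PreNode.vspacer u p (q + 1)) ∨
  (∃ u p, w = PreNode.vspacer u p 2 ∧ z = PreNode.con u p) ∨
  -- the rungs of the arc-gadgets (paths of length six)
  (∃ a k, k < I.t ∧ w = PreNode.rail a false ((I.t - 1 - k) * (4 * I.sg)) ∧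
      z = PreNode.aspacer a k 0) ∨
  (∃ a k q, w = PreNode.aspacer a k q ∧ z = PreNode.aspacer a k (q + 1)) ∨
  (∃ a k, k < I.t ∧ w = PreNode.aspacer a k 4 ∧
      z = PreNode.rail a true ((I.t - 1 - k) * (4 * I.sg))) ∨
  -- the black rung node of sub-ladder `k` of side `s` is adjacent to the
  -- bottommost node of the assigned type of sub-ladder `k` of the connected
  -- side rail of the corresponding vertex-gadget
  (∃ a s k, k < I.t ∧
      w = PreNode.rail a s ((I.t - 1 - k) * (4 * I.sg)) ∧
      z = PreNode.con (endpoint a s)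
        ((I.t - k) * (4 * I.sg) + (I.typ (endpoint a s) (endpoint a (!s))).val)) ∨
  -- the `j`-th orange node (from the bottom) of sub-ladder `k` of side `s` is
  -- adjacent to the `j`-th subsequent node of the assigned type of sub-ladder
  -- `k` of the connected side rail of the corresponding vertex-gadget
  (∃ a s k j, k < I.t ∧ 1 ≤ j ∧ j ≤ I.xval a s k ∧
      w = PreNode.rail a s ((I.t - 1 - k) * (4 * I.sg) + 4 * j) ∧
      z = PreNode.con (endpoint a s)
        ((I.t - k) * (4 * I.sg) + (I.typ (endpoint a s) (endpoint a (!s))).val + 4 * j))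

/-- The graph `H` of the bandwidth construction. -/
def H (I : Instance V) : SimpleGraph (Node I) :=
  SimpleGraph.fromRel (fun a b => Rel I a.1 b.1)

/-- The initial configuration: all brown reservoir nodes and all orange
token-bearing nodes. -/
def initialS (I : Instance V) : Set (Node I) :=
  {w | Brown I w.1 ∨ Orange I w.1}

/-- The gray, black, and orange nodes. -/
def GBO (I : Instance V) : Set (Node I) :=
  {w | Gray I w.1 ∨ Black I w.1 ∨ Orange I w.1}

/-- `w` and `w'` lie in the same connected component of the subgraph of `H`
induced by the gray, black, and orange nodes. -/
def ReachGBO (I : Instance V) (w w' : Node I) : Prop :=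
  ∃ (h : w ∈ GBO I) (h' : w' ∈ GBO I),
    (SimpleGraph.induce (GBO I) (H I)).Reachable ⟨w, h⟩ ⟨w', h'⟩

/-- A bandwidth solution: a set `T` of nodes with `|T| = |S|` satisfying
conditions (B1)–(B5). -/
def IsBWSolution (I : Instance V) (T : Set (Node I)) : Prop :=
  T.ncard = (initialS I).ncard ∧
  -- (B1): no gray, purple, or brown node is in `T`
  (∀ w : Node I, Gray I w.1 ∨ Purple I w.1 ∨ Brown I w.1 → w ∉ T) ∧
  -- (B2): every yellow node is in `T`
  (∀ w : Node I, Yellow I w.1 → w ∈ T) ∧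
  -- (B3): a teal node is in `T` iff some orange node at distance five from it
  -- is not in `T`
  (∀ w : Node I, Teal I w.1 →
      (w ∈ T ↔ ∃ w' : Node I, Orange I w'.1 ∧ (H I).dist w w' = 5 ∧ w' ∉ T)) ∧
  -- (B4): orange nodes at distance four from each other are either both in
  -- `T` or both not in `T`
  (∀ w w' : Node I, Orange I w.1 → Orange I w'.1 → (H I).dist w w' = 4 →
      (w ∈ T ↔ w' ∈ T)) ∧
  -- (B5): in each connected component of the subgraph induced by the gray,
  -- black and orange nodes there are exactly two orange nodes not in `T` at
  -- distance four from a black node, their black nodes are at distance six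
  -- from each other, and no other black node of the component is at distance
  -- four from an orange node not in `T`
  (∀ w₀ : Node I, w₀ ∈ GBO I →
    ∃ o₁ o₂ b₁ b₂ : Node I,
      o₁ ≠ o₂ ∧ Orange I o₁.1 ∧ Orange I o₂.1 ∧ o₁ ∉ T ∧ o₂ ∉ T ∧
      Black I b₁.1 ∧ Black I b₂.1 ∧
      ReachGBO I w₀ o₁ ∧ ReachGBO I w₀ o₂ ∧ ReachGBO I w₀ b₁ ∧ ReachGBO I w₀ b₂ ∧
      (H I).dist o₁ b₁ = 4 ∧ (H I).dist o₂ b₂ = 4 ∧ (H I).dist b₁ b₂ = 6 ∧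
      (∀ o : Node I, Orange I o.1 → o ∉ T → ReachGBO I w₀ o →
        (∃ bb : Node I, Black I bb.1 ∧ (H I).dist o bb = 4) → o = o₁ ∨ o = o₂) ∧
      (∀ bb : Node I, Black I bb.1 → ReachGBO I w₀ bb →
        (∃ o : Node I, Orange I o.1 ∧ o ∉ T ∧ (H I).dist bb o = 4) → bb = b₁ ∨ bb = b₂))

/-- The discovery budget `b = Δ + Σ_{u} δ(u)·(4Σ(t+1) − δ(u))`. -/
def Instance.budget (I : Instance V) : ℕ :=
  (∑ u : V, I.demand u) + ∑ u : V, I.demand u * (I.vlen - I.demand u)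

end BandwidthConstruction

/-!
Spread the nodes over levels: a side-rail or rung node of a vertex-gadget lies at its height, and
the arc-gadgets are raised by one sub-ladder, which brings the sub-ladders that are attached to each
other to the same height. Then adjacent nodes are at most three levels apart, the offset between
nodes of types `a` and `d`, and a level contains at most five nodes of each vertex-gadget and seven
of each arc-gadget. If the nodes are numbered level by level, the two ends of an edge and all nodes
numbered between them lie on at most four levels.
-/

namespace BandwidthConstruction

/-- `bw(G) ≤ b`: some bijective labeling of the vertices by `{1, …, N}` gives adjacent vertices
labels that differ by at most `b`. No infinite graph satisfies this, as `Nat.card` is then `0`. -/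
def HasBandwidthAtMost {α : Type*} (G : SimpleGraph α) (b : ℕ) : Prop :=
  ∃ f : α → ℕ, Function.Injective f ∧ Set.range f = Set.Icc 1 (Nat.card α) ∧
    ∀ w z : α, G.Adj w z → ((f w : ℤ) - (f z : ℤ)).natAbs ≤ b

theorem HasBandwidthAtMost.mono {α : Type*} {G : SimpleGraph α} {b c : ℕ}
    (h : HasBandwidthAtMost G b) (hbc : b ≤ c) : HasBandwidthAtMost G c := by
  obtain ⟨f, hinj, hrange, hadj⟩ := h
  exact ⟨f, hinj, hrange, fun w z hwz ↦ (hadj w z hwz).trans hbc⟩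

theorem exists_equiv_fin_monotone {α β : Type*} [Finite α] [LinearOrder β] (g : α → β) :
    ∃ e : Fin (Nat.card α) ≃ α, Monotone (g ∘ e) :=
  let e := (Finite.equivFin α).symm
  ⟨(Tuple.sort (g ∘ e)).trans e, Tuple.monotone_sort (g ∘ e)⟩

theorem range_val_add_one_equiv_fin {α : Type*} {n : ℕ} (e : α ≃ Fin n) :
    Set.range (fun w ↦ (e w : ℕ) + 1) = Set.Icc 1 n := by
  ext m
  simp only [Set.mem_range, Set.mem_Icc]
  constructor
  · rintro ⟨w, rfl⟩
    have := (e w).isLt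
    omega
  · rintro ⟨hm, hmn⟩
    refine ⟨e.symm ⟨m - 1, by omega⟩, ?_⟩
    rw [e.apply_symm_apply]
    exact Nat.sub_add_cancel hm

section Levels

variable {α : Type*} [Finite α] {level : α → ℕ} {d K : ℕ}

theorem val_le_add_of_monotone_level {n : ℕ} (hK : ∀ l, {w | level w = l}.ncard ≤ K)
    {e : Fin n ↪ α} (he : Monotone (level ∘ e)) {i j : Fin n}
    (hij : level (e j) ≤ level (e i) + d) : (j : ℕ) ≤ i + (d + 1) * K := by
  classical
  let between := (Finset.Icc i j).map e
  have hmaps : ∀ w ∈ between, level w ∈ Finset.Icc (level (e i)) (level (e i) + d) := by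
    intro w hw
    obtain ⟨m, hm, rfl⟩ := Finset.mem_map.1 hw
    obtain ⟨him, hmj⟩ := Finset.mem_Icc.1 hm
    exact Finset.mem_Icc.2 ⟨he him, (he hmj).trans hij⟩
  have hfiber : ∀ l ∈ Finset.Icc (level (e i)) (level (e i) + d),
      (between.filter (level · = l)).card ≤ K := by
    intro l _
    rw [← Set.ncard_coe_finset]
    refine le_trans (Set.ncard_le_ncard fun w hw ↦ ?_) (hK l)
    exact (Finset.mem_filter.1 (Finset.mem_coe.1 hw)).2
  have hcard := Finset.card_le_mul_card_image_of_maps_to hmaps K hfiber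
  rw [Finset.card_map, Fin.card_Icc, Nat.card_Icc, mul_comm,
    show level (e i) + d + 1 - level (e i) = d + 1 by omega] at hcard
  omega

theorem hasBandwidthAtMost_of_level {G : SimpleGraph α}
    (hK : ∀ l, {w | level w = l}.ncard ≤ K)
    (hadj : ∀ w z, G.Adj w z → level w ≤ level z + d) :
    HasBandwidthAtMost G ((d + 1) * K) := by
  obtain ⟨e, he⟩ := exists_equiv_fin_monotone level
  have hle : ∀ w z, G.Adj w z → (e.symm w : ℕ) ≤ e.symm z + (d + 1) * K := fun w z hwz ↦
    val_le_add_of_monotone_level hK (e := e.toEmbedding) he (by simpa using hadj w z hwz)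
  refine ⟨fun w ↦ e.symm w + 1, fun w z h ↦ e.symm.injective (Fin.ext (Nat.succ.inj h)),
    range_val_add_one_equiv_fin e.symm, fun w z hwz ↦ ?_⟩
  have hwz_le := hle w z hwz
  have hzw_le := hle z w hwz.symm
  dsimp only
  omega

end Levels

variable {V : Type*} [Fintype V] [DecidableEq V]

/-- The level at which a node is placed. For `Σ = 0` the side rails are empty, but the spacer nodes
of the rungs of the arc-gadgets remain; the factor `max 1 _` then still separates the rungs. -/
def level (I : Instance V) : PreNode V → ℕ
  | .iso _ p => p
  | .con _ p => p
  | .vspacer _ p _ => p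
  | .rail _ _ p => p + 4 * I.sg
  | .aspacer _ k _ => (I.t - k) * max 1 (4 * I.sg)

/-- The places that a level offers: for each vertex-gadget two on the side rails and three on a
rung, for each arc-gadget two on the side rails and five on a rung. -/
abbrev Slot (I : Instance V) : Type _ :=
  V × (Bool ⊕ Fin 3) ⊕ I.arcs × (Bool ⊕ Fin 5)

/-- The place that a node occupies within its level. -/
def slot (I : Instance V) : Node I → Slot I
  | ⟨.iso u _, _⟩ => .inl (u, .inl false)
  | ⟨.con u _, _⟩ => .inl (u, .inl true)
  | ⟨.vspacer u _ q, h⟩ => .inl (u, .inr ⟨q, h.2⟩)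
  | ⟨.rail a s _, h⟩ => .inr (⟨a, h.1⟩, .inl s)
  | ⟨.aspacer a _ q, h⟩ => .inr (⟨a, h.1⟩, .inr ⟨q, h.2.2⟩)

theorem card_slot (I : Instance V) :
    Nat.card (Slot I) = 5 * Fintype.card V + 7 * I.arcs.card := by
  simp [mul_comm]

theorem prodMk_level_slot_injective (I : Instance V) :
    Function.Injective fun w : Node I ↦ (level I w, slot I w) := by
  have rung_injective {k l : ℕ} (hk : k < I.t) (hl : l < I.t)
      (h : (I.t - k) * max 1 (4 * I.sg) = (I.t - l) * max 1 (4 * I.sg)) : k = l := by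
    have := Nat.eq_of_mul_eq_mul_right (by omega) h
    omega
  rintro ⟨w, hw⟩ ⟨z, hz⟩ h
  cases w <;> cases z <;>
    simp only [level, slot, Prod.mk.injEq, Sum.inl.injEq, Sum.inr.injEq, Subtype.mk.injEq,
      Fin.mk.injEq, reduceCtorEq, and_false, Nat.add_right_cancel_iff] at h
  case aspacer.aspacer => simp [rung_injective hw.2.1 hz.2.1 h.1, h.2]
  all_goals simp [h]

theorem ncard_level_le (I : Instance V) (l : ℕ) :
    {w : Node I | level I w = l}.ncard ≤ 5 * Fintype.card V + 7 * I.arcs.card := by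
  rw [← card_slot, ← Nat.card_coe_set_eq]
  refine Nat.card_le_card_of_injective (fun w ↦ slot I w.1) fun w z h ↦ Subtype.ext ?_
  exact prodMk_level_slot_injective I (Prod.ext (w.2.trans z.2.symm) h)

theorem level_le (I : Instance V) (w : Node I) : level I w ≤ I.vlen + I.t := by
  have hvlen : I.vlen = I.alen + 4 * I.sg := by unfold Instance.vlen Instance.alen; ring
  obtain ⟨w | w | w | w | ⟨a, k, q⟩, hw⟩ := w <;> simp only [Valid, level] at hw ⊢
  case aspacer =>
    calc (I.t - k) * max 1 (4 * I.sg)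
        ≤ I.t * (4 * I.sg + 1) := Nat.mul_le_mul (Nat.sub_le _ _) (by omega)
      _ = I.alen + I.t := by unfold Instance.alen; ring
      _ ≤ I.vlen + I.t := by omega
  all_goals omega

instance (I : Instance V) : Finite (Node I) :=
  Finite.of_injective
    (fun w ↦ ((⟨level I w, level_le I w⟩ : Set.Iic (I.vlen + I.t)), slot I w))
    fun w z h ↦ prodMk_level_slot_injective I <| by
      simpa only [Prod.mk.injEq, Subtype.ext_iff] using h

theorem level_rail_subladder (I : Instance V) (a : V × V) (s : Bool) {k : ℕ} (hk : k < I.t)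
    (r : ℕ) :
    level I (.rail a s ((I.t - 1 - k) * (4 * I.sg) + r)) = (I.t - k) * (4 * I.sg) + r := by
  rw [show I.t - k = I.t - 1 - k + 1 by omega, level]
  ring

theorem level_rail_eq_level_aspacer (I : Instance V) {a : V × V} {s : Bool} {k : ℕ} (hk : k < I.t)
    (h : Valid I (.rail a s ((I.t - 1 - k) * (4 * I.sg)))) (b : V × V) (q : ℕ) :
    level I (.rail a s ((I.t - 1 - k) * (4 * I.sg))) = level I (.aspacer b k q) := by
  have hsg : I.sg ≠ 0 := by
    intro hsg
    simpa [Instance.alen, hsg] using h.2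
  have hmax : max 1 (4 * I.sg) = 4 * I.sg := max_eq_right (by omega)
  simpa only [level, hmax, add_zero] using level_rail_subladder I a s hk 0

theorem level_le_add_three_of_rel (I : Instance V) {w z : PreNode V} (hw : Valid I w)
    (hz : Valid I z) (h : Rel I w z) :
    level I w ≤ level I z + 3 ∧ level I z ≤ level I w + 3 := by
  rcases h with ⟨u, p, rfl, rfl⟩ | ⟨u, p, rfl, rfl⟩ | ⟨a, s, p, rfl, rfl⟩ | ⟨u, p, rfl, rfl⟩ |
    ⟨u, p, q, rfl, rfl⟩ | ⟨u, p, rfl, rfl⟩ | ⟨a, k, hk, rfl, rfl⟩ | ⟨a, k, q, rfl, rfl⟩ |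
    ⟨a, k, hk, rfl, rfl⟩ | ⟨a, s, k, hk, rfl, rfl⟩ | ⟨a, s, k, j, hk, -, -, rfl, rfl⟩
  · simp only [level]; omega
  · simp only [level]; omega
  · simp only [level]; omega
  · simp only [level]; omega
  · simp only [level]; omega
  · simp only [level]; omega
  · simp [level_rail_eq_level_aspacer I hk hw a 0]
  · simp only [level]; omega
  · simp [level_rail_eq_level_aspacer I hk hz a 4]
  · have hrail := level_rail_subladder I a s hk 0
    simp only [level] at hrail ⊢
    omega
  · rw [level_rail_subladder I a s hk, level]
    omega

theorem level_le_add_three_of_adj (I : Instance V) {w z : Node I} (h : (H I).Adj w z) :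
    level I w ≤ level I z + 3 := by
  obtain ⟨-, hwz | hzw⟩ := (SimpleGraph.fromRel_adj _ _ _).1 h
  · exact (level_le_add_three_of_rel I w.2 z.2 hwz).1
  · exact (level_le_add_three_of_rel I z.2 w.2 hzw).2

end BandwidthConstruction

open BandwidthConstruction in
theorem bandwidth_le_general {V : Type*} [Fintype V] [DecidableEq V] (I : Instance V) :
    HasBandwidthAtMost (H I) (20 * Fintype.card V + 28 * I.arcs.card) := by
  refine (hasBandwidthAtMost_of_level (ncard_level_le I)
    fun _ _ ↦ level_le_add_three_of_adj I).mono ?_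
  omega

open BandwidthConstruction in
/-- The bandwidth of the graph `H` of the bandwidth construction is at most
`66κ`, where `κ = |V(D)| + |A(D)|`: there is a bijective labeling of the nodes
by `{1, …, N}` in which the labels of adjacent nodes differ by at most `66κ`. -/
theorem bandwidth_le {V : Type*} [Fintype V] [DecidableEq V] (I : Instance V) :
    ∃ f : Node I → ℕ, Function.Injective f ∧
      Set.range f = Set.Icc 1 (Nat.card (Node I)) ∧
      ∀ w z : Node I, (H I).Adj w z →
        ((f w : ℤ) - (f z : ℤ)).natAbs ≤ 66 * (Fintype.card V + I.arcs.card) :=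
  (bandwidth_le_general I).mono (by omega)
end
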